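/- arXiv:1410.4045 — 2 statements merged into one kernel-verified Lean document; each statement's English description precedes it below -/
import Mathlib

section
/- Let M be a geometric C-minimal structure and T(M) its underlying tree. Let f be a definable partial function from M to the set of nodes (non-leaf elements) of T(M). Then dom(f) can be written as a union F ∪ K with F finite and K definable, such that f is locally constant on K, i.e., every x ∈ K has a cone neighborhood W with f constant on K ∩ W. -/
open FirstOrder Set

universe u

namespace CMinPaper

variable {M : Type u}

/-- The axioms of a (dense) C-relation. -/
def IsCRelation (C : M → M → M → Prop) : Prop :=
  (∀ x y z, C x y z → C x z y) ∧
  (∀ x y z, C x y z → ¬ C y x z) ∧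
  (∀ x y z w, C x y z → C x w z ∨ C w y z) ∧
  (∀ x y, x ≠ y → ∃ z, z ≠ y ∧ C x y z)

/-- A cone (open ball). -/
def IsCone (C : M → M → M → Prop) (s : Set M) : Prop :=
  ∃ a b : M, a ≠ b ∧ s = {x | C a x b}

/-- A 0-level set (closed ball). -/
def IsClosedBall (C : M → M → M → Prop) (s : Set M) : Prop :=
  ∃ a b : M, s = {x | ¬ C x a b}

/-- A ball is a cone or a closed ball. -/
def IsBall (C : M → M → M → Prop) (s : Set M) : Prop :=
  IsCone C s ∨ IsClosedBall C s

/-- The node `a ∧ b` of the underlying tree, viewed as the closed ball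
`{z | ¬ C z a b}` of `M` it determines. -/
def node (C : M → M → M → Prop) (a b : M) : Set M := {x | ¬ C x a b}

/-- `Δ(x,y,z)`. -/
def Delta (C : M → M → M → Prop) (x y z : M) : Prop := ¬ C x y z ∧ ¬ C y x z

/-- The (unary) sets which are definable by a quantifier-free formula with
parameters using only `C` and equality.  A term is either the variable
(`Option.none`) or a parameter (`Option.some a`). -/
inductive QFDef (C : M → M → M → Prop) : Set M → Prop
  | atomC (t₁ t₂ t₃ : Option M) :
      QFDef C {x | C (t₁.getD x) (t₂.getD x) (t₃.getD x)}
  | atomEq (t₁ t₂ : Option M) : QFDef C {x | t₁.getD x = t₂.getD x}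
  | compl {s : Set M} : QFDef C s → QFDef C sᶜ
  | union {s t : Set M} : QFDef C s → QFDef C t → QFDef C (s ∪ t)

/-- The ternary relation interpreting the symbol `r`. -/
def interpC (L : FirstOrder.Language.{u, u}) (M : Type u) [L.Structure M]
    (r : L.Relations 3) : M → M → M → Prop :=
  fun a b c => Language.Structure.RelMap r ![a, b, c]

/-- `M` is C-minimal: in every elementarily equivalent structure, every
definable (with parameters) subset is quantifier-free definable using only
`C` and `=`. -/
def CMinimal (L : FirstOrder.Language.{u, u}) (M : Type u) [L.Structure M]
    (r : L.Relations 3) : Prop :=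
  ∀ (N : Type u) (SN : L.Structure N),
    letI := SN
    L.ElementarilyEquivalent M N →
      ∀ s : Set N, Set.Definable₁ (univ : Set N) L s → QFDef (interpC L N r) s

/-- The (model-theoretic) algebraic closure of a set of parameters. -/
def acl (L : FirstOrder.Language.{u, u}) (M : Type u) [L.Structure M] (A : Set M) : Set M :=
  {a | ∃ s : Set M, Set.Definable₁ A L s ∧ s.Finite ∧ a ∈ s}

/-- The Steinitz exchange property for the algebraic closure. -/
def HasExchange (L : FirstOrder.Language.{u, u}) (M : Type u) [L.Structure M] : Prop :=
  ∀ (A : Set M) (a b : M),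
    a ∈ acl L M (A ∪ {b}) → a ∉ acl L M A → b ∈ acl L M (A ∪ {a})

/-- `M` is geometric: acl has the exchange property in every elementarily
equivalent structure. -/
def Geometric (L : FirstOrder.Language.{u, u}) (M : Type u) [L.Structure M] : Prop :=
  ∀ (N : Type u) (SN : L.Structure N),
    letI := SN
    L.ElementarilyEquivalent M N → HasExchange L N

/-- `M` is trivial: in every elementarily equivalent structure the pregeometry
given by acl is trivial. -/
def TrivialGeometry (L : FirstOrder.Language.{u, u}) (M : Type u) [L.Structure M] : Prop :=
  ∀ (N : Type u) (SN : L.Structure N),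
    letI := SN
    L.ElementarilyEquivalent M N →
      ∀ A : Set N, acl L N A = ⋃ a ∈ A, acl L N {a}

/-- `M` is definably maximal: every definable family of cones which is linearly
ordered by inclusion has a non-empty intersection. -/
def DefinablyMaximal (L : FirstOrder.Language.{u, u}) (M : Type u) [L.Structure M]
    (r : L.Relations 3) : Prop :=
  ∀ (n : ℕ) (S : Set (Fin (n + 1) → M)) (P : Set (Fin n → M)),
    Set.Definable (univ : Set M) L S →
    (∀ p ∈ P, IsCone (interpC L M r) {x | Fin.snoc p x ∈ S}) →
    (∀ p ∈ P, ∀ q ∈ P,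
      {x | Fin.snoc p x ∈ S} ⊆ {x | Fin.snoc q x ∈ S} ∨
        {x | Fin.snoc q x ∈ S} ⊆ {x | Fin.snoc p x ∈ S}) →
    P.Nonempty → (⋂ p ∈ P, {x | Fin.snoc p x ∈ S}).Nonempty

/-- Leaves of the underlying tree are the singletons. -/
def IsLeafSet (s : Set M) : Prop := ∃ x : M, s = {x}

/-- The interval `(lo, hi)` of the branch `br c`, consisting of all nodes
(coded as the closed balls they determine) strictly between the endpoints.
`lo = none` denotes `-∞`; `lo = some p` denotes the node `c ∧ p`; `hi : M`
denotes the node `c ∧ hi` (the leaf `c` when `hi = c`).  The tree ordering is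
reverse inclusion of balls. -/
def branchInterval (C : M → M → M → Prop) (c : M) (lo : Option M) (hi : M) :
    Set (Set M) :=
  {B | (∃ s, B = node C c s) ∧ ¬ IsLeafSet B ∧
    (∀ p ∈ lo, B ⊂ node C c p) ∧ node C c hi ⊂ B}

/-- `I` is an interval of the branch `br c`. -/
def IsIntervalOn (C : M → M → M → Prop) (c : M) (I : Set (Set M)) : Prop :=
  ∃ (lo : Option M) (hi : M), I = branchInterval C c lo hi

/-- `I` is a bounded interval of `br c` (bounded from below and from above). -/
def IsBoundedInterval (C : M → M → M → Prop) (c : M) (I : Set (Set M)) : Prop :=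
  ∃ p hi : M, I = branchInterval C c (some p) hi ∧ ¬ IsLeafSet (node C c hi)

/-- `I` is an unbounded (i.e. not bounded) interval of `br c`. -/
def IsUnboundedInterval (C : M → M → M → Prop) (c : M) (I : Set (Set M)) :
    Prop :=
  IsIntervalOn C c I ∧ ¬ IsBoundedInterval C c I

/-- The relation on nodes coded by `S ⊆ M²` via `(s,t) ↦ (c ∧ s, d ∧ t)`. -/
def codedRel (C : M → M → M → Prop) (S : Set (Fin 2 → M)) (c d : M)
    (B B' : Set M) : Prop :=
  ∃ s t : M, ![s, t] ∈ S ∧ B = node C c s ∧ B' = node C d t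

/-- `S ⊆ M²` codes a bijection between the set `I` of nodes of `br c` and the
set `J` of nodes of `br d`. -/
def CodesBijectionBetween (C : M → M → M → Prop) (S : Set (Fin 2 → M))
    (c d : M) (I J : Set (Set M)) : Prop :=
  (∀ B B', codedRel C S c d B B' → B ∈ I ∧ B' ∈ J) ∧
  (∀ B ∈ I, ∃! B', B' ∈ J ∧ codedRel C S c d B B') ∧
  (∀ B' ∈ J, ∃! B, B ∈ I ∧ codedRel C S c d B B')

/-- Condition (NB): there is no definable bijection between a bounded interval
and an unbounded interval of branches of the underlying tree. -/
def NB (L : FirstOrder.Language.{u, u}) (M : Type u) [L.Structure M] (r : L.Relations 3) :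
    Prop :=
  ∀ (c d : M) (S : Set (Fin 2 → M)), Set.Definable (univ : Set M) L S →
    ∀ I J : Set (Set M),
      IsBoundedInterval (interpC L M r) c I →
      IsUnboundedInterval (interpC L M r) d J →
      ¬ CodesBijectionBetween (interpC L M r) S c d I J

/-- An infinite group definable in `M`: an infinite definable `G ⊆ Mⁿ`
together with a definable subset of `M^{3n}` which is the graph of a group
operation on `G`. -/
def DefinableInfiniteGroup (L : FirstOrder.Language.{u, u}) (M : Type u)
    [L.Structure M] : Prop :=
  ∃ (n : ℕ) (G : Set (Fin n → M)) (mul : (Fin n → M) → (Fin n → M) → Fin n → M)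
    (one : Fin n → M) (inv : (Fin n → M) → Fin n → M),
    Set.Definable (univ : Set M) L G ∧ G.Infinite ∧
    Set.Definable (univ : Set M) L
      {t : (Fin n ⊕ (Fin n ⊕ Fin n)) → M |
        t ∘ Sum.inl ∈ G ∧ t ∘ Sum.inr ∘ Sum.inl ∈ G ∧
          mul (t ∘ Sum.inl) (t ∘ Sum.inr ∘ Sum.inl) = t ∘ Sum.inr ∘ Sum.inr} ∧
    one ∈ G ∧ (∀ a ∈ G, ∀ b ∈ G, mul a b ∈ G) ∧
    (∀ a ∈ G, ∀ b ∈ G, ∀ c ∈ G, mul (mul a b) c = mul a (mul b c)) ∧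
    (∀ a ∈ G, mul one a = a ∧ mul a one = a) ∧
    (∀ a ∈ G, inv a ∈ G ∧ mul a (inv a) = one ∧ mul (inv a) a = one)

/-- `g` is a C-isomorphism from `A` onto `B`. -/
def CIsoOn (C : M → M → M → Prop) (A B : Set M) (g : M → M) : Prop :=
  Set.BijOn g A B ∧ ∀ x ∈ A, ∀ y ∈ A, ∀ z ∈ A, (C x y z ↔ C (g x) (g y) (g z))

/-- The relation `C_e(f,g,h)`. -/
def CeRel (C : M → M → M → Prop) (V : Set M) (e : M) (f g h : M → M) : Prop :=
  ∃ W : Set M, IsCone C W ∧ e ∈ W ∧ W ⊆ V ∧ ∀ x ∈ W \ {e}, C (f x) (g x) (h x)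

/-- The relation `(¬C)_e(f,g,h)`. -/
def NCeRel (C : M → M → M → Prop) (V : Set M) (e : M) (f g h : M → M) : Prop :=
  ∃ W : Set M, IsCone C W ∧ e ∈ W ∧ W ⊆ V ∧ ∀ x ∈ W \ {e}, ¬ C (f x) (g x) (h x)

/-- A function is definable on `V` if its graph over `V` is definable. -/
def DefinableFunOn (L : FirstOrder.Language.{u, u}) (M : Type u) [L.Structure M]
    (V : Set M) (g : M → M) : Prop :=
  Set.Definable (univ : Set M) L {t : Fin 2 → M | t 0 ∈ V ∧ g (t 0) = t 1}

/-- A nice family of functions `{f u : u ∈ U}` on the cone `V`, with absorbing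
element `e`. -/
structure NiceFamily (L : FirstOrder.Language.{u, u}) (M : Type u) [L.Structure M]
    (C : M → M → M → Prop) where
  U : Set M
  V : Set M
  e : M
  f : M → M → M
  coneU : IsCone C U
  coneV : IsCone C V
  he : e ∈ V
  definable : Set.Definable (univ : Set M) L
    {t : Fin 3 → M | t 0 ∈ U ∧ t 1 ∈ V ∧ f (t 0) (t 1) = t 2}
  auto : ∀ u ∈ U, CIsoOn C V V (f u)
  fixe : ∀ u ∈ U, f u e = e
  star : ∀ x ∈ V \ {e}, ∃ V' : Set M, V' ⊆ V ∧ IsCone C V' ∧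
    CIsoOn C U V' fun u => f u x

namespace NiceFamily

variable {L : FirstOrder.Language.{u, u}} [L.Structure M] {C : M → M → M → Prop}

/-- `f u` is tangent to `g` relatively to the family. -/
def Tangent (F : NiceFamily L M C) (u : M) (g : M → M) : Prop :=
  u ∈ F.U ∧ ∀ u' ∈ F.U, NCeRel C F.V F.e (F.f u) (F.f u') g

/-- The set `T_g` of indices of tangents to `g`. -/
def Tset (F : NiceFamily L M C) (g : M → M) : Set M := {u | F.Tangent u g}

/-- The set `Γ_{g,u}`. -/
def Gamma (F : NiceFamily L M C) (g : M → M) (u : M) : Set M :=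
  {y | y ∈ F.U ∧ CeRel C F.V F.e (F.f u) (F.f y) g}

/-- `g` is derivable relatively to the family: it has exactly one tangent. -/
def Derivable (F : NiceFamily L M C) (g : M → M) : Prop := ∃! u, F.Tangent u g

/-- `f u` is non-dilating. -/
def NonDilating (F : NiceFamily L M C) (u : M) : Prop :=
  NCeRel C F.V F.e (fun x => F.f u (F.f u x)) (F.f u) id

/-- `u₀` is an identity element for the family. -/
def HasIdentity (F : NiceFamily L M C) (u₀ : M) : Prop :=
  u₀ ∈ F.U ∧ ∀ x ∈ F.V, F.f u₀ x = x

end NiceFamily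

/-- Continuity on `A` with respect to the topology generated by the cones. -/
def ContinuousOnCones (C : M → M → M → Prop) (A : Set M) (g : M → M) : Prop :=
  ∀ x ∈ A, ∀ W : Set M, IsCone C W → g x ∈ W →
    ∃ W' : Set M, IsCone C W' ∧ x ∈ W' ∧ ∀ y ∈ W' ∩ A, g y ∈ W

/-!
By C-minimality the frontier, in the cone topology, of a definable subset of `M` is finite. So only
finitely many points of a given fibre of `f` lie outside its interior, and it has to be shown that
only finitely many `x` lie outside the interior of their own fibre. Such an `x` is algebraic over
any pair `a, b` with `f x = a ∧ b`. As the node `f x` is not a leaf, there are infinitely many `a`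
above it, and for each of them infinitely many `b` with `a ∧ b = f x`. Infinitely many bad points
would therefore give, in elementary extensions of `M`, a generic `x`, an `a` generic over `x` and a
`b` generic over `x, a` such that `x` is algebraic over `a, b`, against the exchange property.

Exchange enters through one consequence, applied first to `b` and then to `a`: if the fibres
`{x | (x, a) ∈ S}` of a definable `S ⊆ M²` are all finite, then `{a | (x, a) ∈ S}` is finite for
all but finitely many `x`. It can be iterated because by C-minimality a definable set is infinite
if and only if it contains a cone, so that infinitude is a definable condition on parameters.
-/

open Filter Topology TopologicalSpace

/-- The cone at the node `a ∧ b` which contains `b`, for `a ≠ b`; for `a = b` it is empty. -/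
def cone (C : M → M → M → Prop) (a b : M) : Set M := {x | C a x b}

namespace IsCRelation

variable {C : M → M → M → Prop}

theorem symm (hC : IsCRelation C) {x y z : M} (h : C x y z) : C x z y := hC.1 x y z h

theorem asymm (hC : IsCRelation C) {x y z : M} (h : C x y z) : ¬ C y x z := hC.2.1 x y z h

theorem cases (hC : IsCRelation C) {x y z : M} (h : C x y z) (w : M) : C x w z ∨ C w y z :=
  hC.2.2.1 x y z w h

theorem exists_ne (hC : IsCRelation C) {x y : M} (h : x ≠ y) : ∃ z, z ≠ y ∧ C x y z :=
  hC.2.2.2 x y h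

theorem irrefl_left (hC : IsCRelation C) (x y : M) : ¬ C x x y := fun h => hC.asymm h h

theorem irrefl_right (hC : IsCRelation C) (x y : M) : ¬ C x y x :=
  fun h => hC.irrefl_left x y (hC.symm h)

theorem ne (hC : IsCRelation C) {x y z : M} (h : C x y z) : x ≠ y :=
  fun e => hC.irrefl_left y z (e ▸ h)

theorem self_right_iff (hC : IsCRelation C) {x y : M} : C x y y ↔ x ≠ y := by
  refine ⟨hC.ne, fun hxy => ?_⟩
  obtain ⟨z, -, hz⟩ := hC.exists_ne hxy
  exact (hC.cases (hC.symm hz) y).resolve_right (hC.irrefl_right y z)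

theorem trans (hC : IsCRelation C) {a x y z : M} (hxy : C a x y) (hyz : C a y z) : C a x z := by
  rcases hC.cases hyz x with haxz | hxyz
  · exact haxz
  · exact hC.symm <| (hC.cases (hC.symm hxy) z).resolve_right fun hzyx =>
      hC.asymm (hC.symm hxyz) (hC.symm hzyx)

theorem mem_cone_self (hC : IsCRelation C) {a b : M} (hab : a ≠ b) : b ∈ cone C a b :=
  hC.self_right_iff.2 hab

theorem cone_eq_of_mem (hC : IsCRelation C) {a b x : M} (hx : x ∈ cone C a b) :
    cone C a x = cone C a b :=
  Set.ext fun _ => ⟨fun hy => hC.trans hy hx, fun hy => hC.trans hy (hC.symm hx)⟩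

theorem cone_subset_or_subset (hC : IsCRelation C) (a c x : M) :
    cone C a x ⊆ cone C c x ∨ cone C c x ⊆ cone C a x := by
  simp only [or_iff_not_imp_left, not_subset]
  rintro ⟨z, hza, hzc⟩ w hw
  have hac : C a c x := (hC.cases hza c).resolve_right hzc
  exact (hC.cases hw a).resolve_left (hC.asymm hac)

theorem node_comm (hC : IsCRelation C) (a b : M) : node C a b = node C b a :=
  Set.ext fun _ => not_congr ⟨hC.symm, hC.symm⟩

theorem node_self (hC : IsCRelation C) (a : M) : node C a a = {a} :=
  Set.ext fun _ => hC.self_right_iff.not_left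

theorem cone_subset_node (hC : IsCRelation C) (a b : M) : cone C a b ⊆ node C a b :=
  fun _ hx => hC.asymm hx

theorem node_eq_of_mem_cone (hC : IsCRelation C) {a b c : M} (hc : c ∈ cone C a b) :
    node C a c = node C a b := by
  have node_subset {b c : M} (hc : C a c b) : node C a c ⊆ node C a b := fun y hy hyab =>
    (hC.cases (hC.symm hyab) c).elim (fun hycb => hy (hC.symm hycb)) fun hcba =>
      hC.asymm hc (hC.symm hcba)
  exact (node_subset hc).antisymm (node_subset (hC.symm hc))

theorem node_eq_of_notMem_cone (hC : IsCRelation C) {a b x : M} (hx : x ∈ node C a b)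
    (hxa : x ∉ cone C b a) : node C x a = node C a b := by
  refine Set.ext fun y => not_congr ⟨fun hyxa => ?_, fun hyab => ?_⟩
  · exact hC.symm ((hC.cases hyxa b).resolve_right hxa)
  · exact hC.trans ((hC.cases hyab x).resolve_right hx) (hC.symm hyab)

theorem exists_node_eq_of_mem (hC : IsCRelation C) {a b x : M} (hab : a ≠ b)
    (hx : x ∈ node C a b) : ∃ c, x ≠ c ∧ node C x c = node C a b := by
  by_cases hxa : x ∈ cone C b a
  · refine ⟨b, (hC.ne hxa).symm, ?_⟩
    rw [hC.node_comm, hC.node_eq_of_mem_cone hxa, hC.node_comm]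
  · refine ⟨a, ?_, hC.node_eq_of_notMem_cone hx hxa⟩
    rintro rfl
    exact hxa (hC.mem_cone_self hab.symm)

theorem exists_isTopologicalBasis [Nontrivial M] (hC : IsCRelation C) :
    ∃ _ : TopologicalSpace M, IsTopologicalBasis {W : Set M | IsCone C W} := by
  refine ⟨.generateFrom {W | IsCone C W},
    @IsTopologicalBasis.mk _ (.generateFrom _) _ ?_ ?_ rfl⟩
  · rintro _ ⟨a, b, -, rfl⟩ _ ⟨c, d, -, rfl⟩ x ⟨hxb, hxd⟩
    change ∃ W, IsCone C W ∧ x ∈ W ∧ W ⊆ cone C a b ∩ cone C c d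
    rw [← hC.cone_eq_of_mem hxb, ← hC.cone_eq_of_mem hxd]
    have hax : a ≠ x := hC.ne hxb
    have hcx : c ≠ x := hC.ne hxd
    rcases hC.cone_subset_or_subset a c x with hac | hca
    · exact ⟨cone C a x, ⟨a, x, hax, rfl⟩, hC.mem_cone_self hax, subset_inter subset_rfl hac⟩
    · exact ⟨cone C c x, ⟨c, x, hcx, rfl⟩, hC.mem_cone_self hcx, subset_inter hca subset_rfl⟩
  · refine sUnion_eq_univ_iff.2 fun x => ?_
    obtain ⟨a, hax⟩ := _root_.exists_ne x
    exact ⟨cone C a x, ⟨a, x, hax, rfl⟩, hC.mem_cone_self hax⟩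

section Topology

variable [TopologicalSpace M]

theorem mem_nhds_iff (hC : IsCRelation C) (hB : IsTopologicalBasis {W | IsCone C W}) {x : M}
    {s : Set M} : s ∈ 𝓝 x ↔ ∃ a, a ≠ x ∧ cone C a x ⊆ s := by
  rw [hB.mem_nhds_iff]
  constructor
  · rintro ⟨_, ⟨a, b, -, rfl⟩, hx, hs⟩
    exact ⟨a, hC.ne hx, (hC.cone_eq_of_mem hx).trans_subset hs⟩
  · rintro ⟨a, hax, hs⟩
    exact ⟨cone C a x, ⟨a, x, hax, rfl⟩, hC.mem_cone_self hax, hs⟩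

theorem isOpen_iff (hC : IsCRelation C) (hB : IsTopologicalBasis {W | IsCone C W}) {s : Set M} :
    IsOpen s ↔ ∀ x ∈ s, ∃ a, a ≠ x ∧ cone C a x ⊆ s :=
  isOpen_iff_mem_nhds.trans (forall₂_congr fun _ _ => hC.mem_nhds_iff hB)

theorem t1Space (hC : IsCRelation C) (hB : IsTopologicalBasis {W | IsCone C W}) : T1Space M :=
  ⟨fun a => isOpen_compl_iff.1 <| (hC.isOpen_iff hB).2 fun _ hxa =>
    ⟨a, Ne.symm hxa, fun _ hy => (hC.ne hy).symm⟩⟩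

theorem nhdsNE_neBot (hC : IsCRelation C) (hB : IsTopologicalBasis {W | IsCone C W}) (x : M) :
    (𝓝[≠] x).NeBot := by
  refine mem_closure_iff_nhdsWithin_neBot.1 (mem_closure_iff_nhds.2 fun s hs => ?_)
  obtain ⟨a, hax, has⟩ := (hC.mem_nhds_iff hB).1 hs
  obtain ⟨z, hzx, haz⟩ := hC.exists_ne hax
  exact ⟨z, has (hC.symm haz), hzx⟩

theorem isClopen_cone (hC : IsCRelation C) (hB : IsTopologicalBasis {W | IsCone C W}) {a b : M}
    (hab : a ≠ b) : IsClopen (cone C a b) := by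
  refine ⟨isOpen_compl_iff.1 <| (hC.isOpen_iff hB).2 fun x hx => ?_,
    hB.isOpen ⟨a, b, hab, rfl⟩⟩
  obtain rfl | hax := eq_or_ne a x
  · exact ⟨b, hab.symm, fun y hy hay => hC.asymm (hC.symm hy) (hC.symm hay)⟩
  · exact ⟨a, hax, fun y hy hay => hx (hC.trans (hC.symm hy) hay)⟩

theorem isClopen_node (hC : IsCRelation C) (hB : IsTopologicalBasis {W | IsCone C W}) {a b : M}
    (hab : a ≠ b) : IsClopen (node C a b) := by
  refine ⟨isOpen_compl_iff.1 <| (hC.isOpen_iff hB).2 fun x hx => ?_,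
    (hC.isOpen_iff hB).2 fun x hx => ?_⟩
  · have hxab : C x a b := not_not.1 hx
    refine ⟨a, (hC.ne hxab).symm, fun y hy => not_not.2 ?_⟩
    exact (hC.cases hxab y).resolve_left fun hxyb =>
      hC.asymm (hC.trans hxab (hC.symm hxyb)) (hC.symm hy)
  · obtain rfl | hxa := eq_or_ne x a
    · exact ⟨b, hab.symm, fun y hy hyab => hC.asymm (hC.symm hyab) hy⟩
    · refine ⟨a, hxa.symm, fun y hy hyab => ?_⟩
      have hyxb : C y x b := (hC.cases hyab x).resolve_right hx
      exact hC.asymm (hC.trans hyab (hC.symm hyxb)) hy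

theorem finite_frontier_singleton (hC : IsCRelation C)
    (hB : IsTopologicalBasis {W | IsCone C W}) (a : M) : (frontier {a}).Finite := by
  have := hC.t1Space hB
  exact (finite_singleton a).subset isClosed_singleton.frontier_subset

theorem finite_frontier_cone (hC : IsCRelation C)
    (hB : IsTopologicalBasis {W | IsCone C W}) (a b : M) : (frontier (cone C a b)).Finite := by
  obtain rfl | hab := eq_or_ne a b
  · simp [cone, hC.irrefl_right]
  · simp [(hC.isClopen_cone hB hab).frontier_eq]

theorem finite_frontier_node (hC : IsCRelation C)
    (hB : IsTopologicalBasis {W | IsCone C W}) (a b : M) : (frontier (node C a b)).Finite := by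
  obtain rfl | hab := eq_or_ne a b
  · exact hC.node_self a ▸ hC.finite_frontier_singleton hB a
  · simp [(hC.isClopen_node hB hab).frontier_eq]

end Topology

theorem infinite_cone (hC : IsCRelation C) {a b : M} (hab : a ≠ b) : (cone C a b).Infinite := by
  have : Nontrivial M := ⟨a, b, hab⟩
  obtain ⟨_, hB⟩ := hC.exists_isTopologicalBasis
  have := hC.t1Space hB
  have := hC.nhdsNE_neBot hB b
  exact infinite_of_mem_nhds b ((hC.mem_nhds_iff hB).2 ⟨a, hab, subset_rfl⟩)

theorem infinite_node (hC : IsCRelation C) {a b : M} (hab : a ≠ b) : (node C a b).Infinite :=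
  (hC.infinite_cone hab).mono (hC.cone_subset_node a b)

theorem infinite_setOf_node_eq (hC : IsCRelation C) {a b x : M} (hab : a ≠ b)
    (hx : x ∈ node C a b) : {z | node C x z = node C a b}.Infinite := by
  obtain ⟨c, hxc, hc⟩ := hC.exists_node_eq_of_mem hab hx
  exact (hC.infinite_cone hxc).mono fun z hz => (hC.node_eq_of_mem_cone hz).trans hc

end IsCRelation

namespace QFDef

variable {C : M → M → M → Prop} {s : Set M}

theorem finite_frontier [TopologicalSpace M] (hC : IsCRelation C)
    (hB : IsTopologicalBasis {W | IsCone C W}) (hs : QFDef C s) : (frontier s).Finite := by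
  induction hs with
  | atomC t₁ t₂ t₃ =>
    rcases t₁ with _ | a <;> rcases t₂ with _ | b <;> rcases t₃ with _ | c <;>
      simp only [Option.getD_none, Option.getD_some]
    case none.none.none | none.none.some => simp [hC.irrefl_left]
    case none.some.none => simp [hC.irrefl_right]
    case none.some.some =>
      rw [show {x | C x b c} = (node C b c)ᶜ from ext fun _ => not_not.symm, frontier_compl]
      exact hC.finite_frontier_node hB b c
    case some.none.none =>
      rw [show {x | C a x x} = {a}ᶜ from ext fun _ => hC.self_right_iff.trans ne_comm,
        frontier_compl]
      exact hC.finite_frontier_singleton hB a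
    case some.none.some => exact hC.finite_frontier_cone hB a c
    case some.some.none =>
      rw [show {x | C a b x} = cone C a b from ext fun _ => ⟨hC.symm, hC.symm⟩]
      exact hC.finite_frontier_cone hB a b
    case some.some.some => by_cases h : C a b c <;> simp [h]
  | atomEq t₁ t₂ =>
    rcases t₁ with _ | a <;> rcases t₂ with _ | b <;>
      simp only [Option.getD_none, Option.getD_some]
    case none.none => simp
    case none.some => exact hC.finite_frontier_singleton hB b
    case some.none => simpa [eq_comm] using hC.finite_frontier_singleton hB a
    case some.some => by_cases h : a = b <;> simp [h]
  | compl _ ih => rwa [frontier_compl]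
  | union _ _ ihs iht =>
    exact (ihs.union iht).subset <| (frontier_union_subset _ _).trans <|
      union_subset_union inter_subset_left inter_subset_right

theorem infinite_iff (hC : IsCRelation C) (hs : QFDef C s) :
    s.Infinite ↔ ∃ a b, a ≠ b ∧ cone C a b ⊆ s := by
  refine ⟨fun hinf => ?_, fun ⟨a, b, hab, hsub⟩ => (hC.infinite_cone hab).mono hsub⟩
  have : Nontrivial M := nontrivial_of_nontrivial hinf.nontrivial
  obtain ⟨_, hB⟩ := hC.exists_isTopologicalBasis
  obtain ⟨x, hxs, hx⟩ := (hinf.sdiff (hs.finite_frontier hC hB)).nonempty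
  have hint : x ∈ interior s := by_contra fun h => hx ⟨subset_closure hxs, h⟩
  obtain ⟨a, hax, hsub⟩ := (hC.mem_nhds_iff hB).1 (mem_interior_iff_mem_nhds.1 hint)
  exact ⟨a, x, hax, hsub⟩

end QFDef

section Definability

variable {L : FirstOrder.Language.{u, u}} [L.Structure M] {A : Set M} {β : Type*}

theorem definable_exists {P : (β → M) → M → Prop}
    (hP : A.Definable L {w : β ⊕ Fin 1 → M | P (fun b => w (.inl b)) (w (.inr 0))}) :
    A.Definable L {v | ∃ x, P v x} := by
  convert hP.exists_of_finite using 1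
  exact ext fun v => ⟨fun ⟨x, hx⟩ => ⟨fun _ => x, hx⟩, fun ⟨w, hw⟩ => ⟨w 0, hw⟩⟩

theorem definable_forall {P : (β → M) → M → Prop}
    (hP : A.Definable L {w : β ⊕ Fin 1 → M | P (fun b => w (.inl b)) (w (.inr 0))}) :
    A.Definable L {v | ∀ x, P v x} := by
  convert hP.forall_of_finite using 1
  exact ext fun v => ⟨fun h w => h (w 0), fun h x => h fun _ => x⟩

theorem definable_triple_mem {R : Set (Fin 3 → M)} (hR : A.Definable L R)
    {f g h : (β → M) → M} (hf : A.DefinableFun L f) (hg : A.DefinableFun L g)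
    (hh : A.DefinableFun L h) : A.Definable L {v | ![f v, g v, h v] ∈ R} :=
  hR.preimage_map (F := fun v => ![f v, g v, h v])
    (Fin.forall_fin_succ.2 ⟨hf, Fin.forall_fin_two.2 ⟨hg, hh⟩⟩)

theorem definable_interpC (r : L.Relations 3) {f g h : (β → M) → M} (hf : A.DefinableFun L f)
    (hg : A.DefinableFun L g) (hh : A.DefinableFun L h) :
    A.Definable L {v | interpC L M r (f v) (g v) (h v)} := by
  have hr : A.Definable L {v : Fin 3 → M | Language.Structure.RelMap r v} :=
    (empty_definable_iff.2 ⟨r.formula Language.Term.var, by ext; simp⟩).mono (empty_subset A)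
  exact definable_triple_mem hr hf hg hh

theorem definable_range_iff {Θ : Type*} {e : Θ → M} {s : Set (β → M)} :
    (range e).Definable L s ↔ ∃ ψ : L.Formula (Θ ⊕ β), s = {v | ψ.Realize (Sum.elim e v)} := by
  rw [definable_iff_exists_formula_sum]
  constructor
  · rintro ⟨φ, rfl⟩
    refine ⟨φ.relabel (Sum.map (rangeSplitting e) id), ?_⟩
    simp only [Language.Formula.realize_relabel, Sum.elim_comp_map, comp_rangeSplitting,
      Function.comp_id]
  · rintro ⟨ψ, rfl⟩
    refine ⟨ψ.relabel (Sum.map (rangeFactorization e) id), ?_⟩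
    simp only [Language.Formula.realize_relabel, Sum.elim_comp_map, Function.comp_id]
    rfl

theorem definable₁_range_iff {Θ : Type*} {e : Θ → M} {s : Set M} :
    (range e).Definable₁ L s ↔
      ∃ ψ : L.Formula (Θ ⊕ Fin 1), s = {x | ψ.Realize (Sum.elim e fun _ => x)} := by
  rw [Definable₁, definable_range_iff]
  simp only [Set.ext_iff, (Equiv.funUnique (Fin 1) M).symm.surjective.forall]
  rfl

/-- A family of subsets of `M` indexed by tuples is definable over `A` if the relation
`x ∈ s v` between `x` and `v` is. -/
def DefinableFamily (L : FirstOrder.Language.{u, u}) [L.Structure M] (A : Set M)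
    (s : (β → M) → Set M) : Prop :=
  A.Definable L {w : β ⊕ Fin 1 → M | w (.inr 0) ∈ s fun b => w (.inl b)}

namespace DefinableFamily

variable [Finite β] {s : (β → M) → Set M} {r : L.Relations 3}

theorem definable_mem {γ : Type*} (hs : DefinableFamily L A s) {f : (γ → M) → M}
    {g : (γ → M) → β → M} (hf : A.DefinableFun L f) (hg : A.DefinableMap L g) :
    A.Definable L {v | f v ∈ s (g v)} :=
  hs.preimage_map (F := fun v => Sum.elim (g v) fun _ => f v) (Sum.rec hg fun _ => hf)

theorem definable₁ (hs : DefinableFamily L univ s) (v : β → M) :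
    (univ : Set M).Definable₁ L (s v) :=
  hs.definable_mem (.proj L) fun _ => L.definableFun_const _ (mem_univ _)

theorem definable_cone_subset (hs : DefinableFamily L A s) {γ : Type*} (i j : γ) (e : β → γ) :
    A.Definable L {v : γ → M | cone (interpC L M r) (v i) (v j) ⊆ s fun b => v (e b)} :=
  definable_forall <| (definable_interpC r (.proj L) (.proj L) (.proj L)).himp <|
    hs.definable_mem (.proj L) fun _ => .proj L

theorem interior [TopologicalSpace M] (hC : IsCRelation (interpC L M r))
    (hB : IsTopologicalBasis {W | IsCone (interpC L M r) W}) (hs : DefinableFamily L A s) :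
    DefinableFamily L A fun v => interior (s v) := by
  simp only [DefinableFamily, mem_interior_iff_mem_nhds, hC.mem_nhds_iff hB]
  exact definable_exists <| (DefinableFun.ofPred_eq (.proj L) (.proj L)).compl.inter <|
    hs.definable_cone_subset (Sum.inr 0) (Sum.inl (Sum.inr 0)) fun b => Sum.inl (Sum.inl b)

theorem definable_infinite (hC : IsCRelation (interpC L M r)) (hmin : CMinimal L M r)
    (hs : DefinableFamily L univ s) : (univ : Set M).Definable L {v | (s v).Infinite} := by
  simp only [(hmin M _ rfl _ (hs.definable₁ _)).infinite_iff hC]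
  exact definable_exists <| definable_exists <|
    (DefinableFun.ofPred_eq (.proj L) (.proj L)).compl.inter <|
    hs.definable_cone_subset (Sum.inl (Sum.inr 0)) (Sum.inr 0) fun b => Sum.inl (Sum.inl b)

end DefinableFamily

end Definability

/-- The ultrapower of `M` along `U`. -/
abbrev Ultrapower (M : Type u) {I : Type u} (U : Ultrafilter I) : Type u :=
  (U : Filter I).Product fun _ : I => M

namespace Ultrapower

variable {I : Type u}

/-- The class of a sequence in the ultrapower. -/
def mk (U : Ultrafilter I) (f : I → M) : Ultrapower M U :=
  (f : (U : Filter I).Product fun _ : I => M)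

/-- The internal set given by a family of subsets of `M`, that is, the ultraproduct of the family
viewed as a subset of the ultrapower of `M`. -/
def internalSet (U : Ultrafilter I) (s : I → Set M) : Set (Ultrapower M U) :=
  {x | ∃ f, mk U f = x ∧ ∀ᶠ i in U, f i ∈ s i}

variable {U : Ultrafilter I}

theorem mk_surjective : Function.Surjective (mk U : (I → M) → Ultrapower M U) :=
  Quotient.exists_rep

theorem mk_eq_mk {f g : I → M} : mk U f = mk U g ↔ ∀ᶠ i in U, f i = g i := Quotient.eq''

theorem mk_mem_internalSet {s : I → Set M} {f : I → M} :
    mk U f ∈ internalSet U s ↔ ∀ᶠ i in U, f i ∈ s i := by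
  refine ⟨?_, fun hf => ⟨f, rfl, hf⟩⟩
  rintro ⟨g, hgf, hg⟩
  filter_upwards [hg, mk_eq_mk.1 hgf] with i hi hgfi using hgfi ▸ hi

theorem eventually_subset_of_internalSet_subset {s t : I → Set M}
    (hst : internalSet U s ⊆ internalSet U t) : ∀ᶠ i in U, s i ⊆ t i := by
  by_contra h
  simp only [← Ultrafilter.eventually_not, not_subset] at h
  obtain ⟨f, hf⟩ := h.choice
  have hft := mk_mem_internalSet.1 (hst (mk_mem_internalSet.2 (hf.mono fun _ => And.left)))
  obtain ⟨i, hfi, -, hfi'⟩ := (hft.and hf).exists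
  exact hfi' hfi

theorem infinite_internalSet {s : I → Set M} (hs : ∀ᶠ i in U, (s i).Infinite) :
    (internalSet U s).Infinite := by
  have hexists : ∀ᶠ i in U, ∃ k : ℕ → M, Function.Injective k ∧ ∀ n, k n ∈ s i :=
    hs.mono fun i hi => ⟨fun n => hi.natEmbedding _ n,
      Subtype.val_injective.comp (hi.natEmbedding _).injective, fun n => (hi.natEmbedding _ n).2⟩
  obtain ⟨k, hk⟩ := hexists.choice
  refine infinite_of_injective_forall_mem (f := fun n => mk U fun i => k i n)
    (fun m n hmn => ?_) fun n => mk_mem_internalSet.2 (hk.mono fun i hi => hi.2 n)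
  obtain ⟨i, hmni, hki, -⟩ := ((mk_eq_mk.1 hmn).and hk).exists
  exact hki hmni

variable {L : FirstOrder.Language.{u, u}} [L.Structure M] [Nonempty M]

theorem realize_mk_comp {β : Type*} (φ : L.Formula β) (f : β → I → M) :
    φ.Realize (mk U ∘ f) ↔ ∀ᶠ i in U, φ.Realize fun b => f b i :=
  Language.Ultraproduct.realize_formula_cast φ f

theorem elementarilyEquivalent (U : Ultrafilter I) :
    L.ElementarilyEquivalent M (Ultrapower M U) :=
  Language.elementarilyEquivalent_iff.2 fun φ => by
    rw [Language.Ultraproduct.sentence_realize, eventually_const]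

theorem interpC_mk {r : L.Relations 3} {f g h : I → M} :
    interpC L (Ultrapower M U) r (mk U f) (mk U g) (mk U h) ↔
      ∀ᶠ i in U, interpC L M r (f i) (g i) (h i) := by
  have hcomp : ![mk U f, mk U g, mk U h] = mk U ∘ ![f, g, h] := by
    ext j; fin_cases j <;> rfl
  have heval (i : I) : ![f i, g i, h i] = fun j => ![f, g, h] j i := by
    ext j; fin_cases j <;> rfl
  have hLos := realize_mk_comp (U := U) (r.formula Language.Term.var) ![f, g, h]
  simp only [Language.Formula.realize_rel, Language.Term.realize_var] at hLos
  simpa only [interpC, hcomp, heval] using hLos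

theorem isCRelation {r : L.Relations 3} (hC : IsCRelation (interpC L M r)) :
    IsCRelation (interpC L (Ultrapower M U) r) := by
  simp only [IsCRelation, mk_surjective.forall, mk_surjective.exists, interpC_mk, Ne, mk_eq_mk,
    ← Ultrafilter.eventually_not, ← Ultrafilter.eventually_or]
  refine ⟨fun x y z h => h.mono fun i => hC.symm, fun x y z h => h.mono fun i => hC.asymm,
    fun x y z w h => h.mono fun i hi => hC.cases hi (w i), fun x y h => ?_⟩
  obtain ⟨z, hz⟩ := (h.mono fun i hi => hC.exists_ne hi).choice
  exact ⟨z, hz.mono fun i => And.left, hz.mono fun i => And.right⟩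

theorem cone_mk {r : L.Relations 3} {f g : I → M} :
    cone (interpC L (Ultrapower M U) r) (mk U f) (mk U g) =
      internalSet U fun i => cone (interpC L M r) (f i) (g i) := by
  refine ext <| mk_surjective.forall.2 fun h => ?_
  simp only [cone, mem_ofPred_eq, interpC_mk, mk_mem_internalSet]

theorem finite_internalSet {r : L.Relations 3} (hC : IsCRelation (interpC L M r))
    (hmin : CMinimal L M r) {s : I → Set M}
    (hdef : (univ : Set (Ultrapower M U)).Definable₁ L (internalSet U s))
    (hs : ∀ᶠ i in U, (s i).Finite) : (internalSet U s).Finite := by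
  by_contra hinf
  have hqf := hmin (Ultrapower M U) _ (elementarilyEquivalent U) _ hdef
  obtain ⟨a, b, hab, hsub⟩ := (hqf.infinite_iff (isCRelation hC)).1 hinf
  obtain ⟨a, rfl⟩ := mk_surjective a
  obtain ⟨b, rfl⟩ := mk_surjective b
  rw [Ne, mk_eq_mk, ← Ultrafilter.eventually_not] at hab
  rw [cone_mk] at hsub
  obtain ⟨i, hfin, hne, hcone⟩ :=
    (hs.and (hab.and (eventually_subset_of_internalSet_subset hsub))).exists
  exact hC.infinite_cone hne (hfin.subset hcone)

theorem internalSet_setOf_realize {Θ : Type*} (ψ : L.Formula (Θ ⊕ Fin 1)) (g : I → Θ → M) :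
    internalSet U (fun i => {z | ψ.Realize (Sum.elim (g i) fun _ => z)}) =
      {x | ψ.Realize (Sum.elim (fun θ => mk U fun i => g i θ) fun _ => x)} := by
  refine ext <| mk_surjective.forall.2 fun f => mk_mem_internalSet.trans ?_
  have hcomp : (Sum.elim (fun θ => mk U fun i => g i θ) fun _ => mk U f) =
      mk U ∘ fun b i => Sum.elim (g i) (fun _ : Fin 1 => f i) b :=
    funext <| Sum.rec (fun _ => rfl) fun _ => rfl
  simp only [mem_ofPred_eq, hcomp, realize_mk_comp]

theorem definable₁_internalSet {β : Type*} {s : (β → M) → Set M}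
    (hs : DefinableFamily L univ s) (f : I → β → M) :
    (range (fun m => mk U fun _ => m) ∪ range fun b => mk U fun i => f i b).Definable₁ L
      (internalSet U fun i => s (f i)) := by
  obtain ⟨φ, hφ⟩ := definable_range_iff.1 (range_id.symm ▸ hs : (range id).Definable L _)
  have hrange : (range fun m => mk U fun _ => m) ∪ (range fun b => mk U fun i => f i b) =
      range fun θ : M ⊕ β => mk U fun i => Sum.elim id (f i) θ := by
    rw [← Sum.elim_range]
    exact congrArg range <| funext <| Sum.rec (fun _ => rfl) fun _ => rfl
  rw [hrange, definable₁_range_iff]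
  refine ⟨φ.relabel (Equiv.sumAssoc M β (Fin 1)).symm, ?_⟩
  rw [← internalSet_setOf_realize]
  refine congrArg (internalSet U) <| funext fun i => ext fun z => ?_
  refine (Set.ext_iff.1 hφ (Sum.elim (f i) fun _ => z)).trans ?_
  simp only [mem_ofPred_eq, Language.Formula.realize_relabel]
  refine iff_of_eq <| congrArg φ.Realize <| funext ?_
  rintro (m | b | j) <;> rfl

theorem exists_eq_internalSet {Θ : Type*} {g : I → Θ → M} {s : Set (Ultrapower M U)}
    (hs : (range fun θ => mk U fun i => g i θ).Definable₁ L s) :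
    ∃ t : (Θ → M) → Set M, s = internalSet U fun i => t (g i) := by
  obtain ⟨ψ, rfl⟩ := definable₁_range_iff.1 hs
  exact ⟨fun e => {z | ψ.Realize (Sum.elim e fun _ => z)}, (internalSet_setOf_realize ψ g).symm⟩

theorem mk_notMem_acl {Θ : Type*} {g : I → Θ → M} {f : I → M}
    (h : ∀ t : (Θ → M) → Set M, ∀ᶠ i in U, (t (g i)).Finite → f i ∉ t (g i)) :
    mk U f ∉ acl L (Ultrapower M U) (range fun θ => mk U fun i => g i θ) := by
  rintro ⟨s, hs, hfin, hmem⟩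
  obtain ⟨t, rfl⟩ := exists_eq_internalSet hs
  refine infinite_internalSet ?_ hfin
  filter_upwards [h t, mk_mem_internalSet.1 hmem] with i hi hi' hfin' using hi hfin' hi'

end Ultrapower

theorem exists_ultrafilter_generic {S : Set (M × M)}
    (hS : {x | {a | (x, a) ∈ S}.Infinite}.Infinite) :
    ∃ U : Ultrafilter (M × M), (∀ᶠ p in U, p ∈ S) ∧
      (∀ s : Set M, s.Finite → ∀ᶠ p : M × M in U, p.1 ∉ s) ∧
      ∀ t : M → Set M, ∀ᶠ p : M × M in U, (t p.1).Finite → p.2 ∉ t p.1 := by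
  let X : Set M := {x | {a | (x, a) ∈ S}.Infinite}
  -- Along `F`, first `p.1` is generic in `X`, then `p.2` is generic in the fibre over `p.1`.
  let F : Filter (M × M) :=
    (cofinite ⊓ 𝓟 X).bind fun x => (cofinite ⊓ 𝓟 {a | (x, a) ∈ S}).map (Prod.mk x)
  have eventually_F (P : M × M → Prop) : (∀ᶠ p in F, P p) ↔
      ∀ᶠ x in cofinite ⊓ 𝓟 X, ∀ᶠ a in cofinite ⊓ 𝓟 {a | (x, a) ∈ S}, P (x, a) := by
    simp only [F, eventually_bind, eventually_map]
  have eventually_mem (s : Set M) : ∀ᶠ x in cofinite ⊓ 𝓟 s, x ∈ s :=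
    mem_inf_of_right (mem_principal_self s)
  have eventually_notMem {s : Set M} (t : Set M) (hs : s.Finite) :
      ∀ᶠ x in cofinite ⊓ 𝓟 t, x ∉ s := mem_inf_of_left hs.compl_mem_cofinite
  have hF : F.NeBot := by
    refine ⟨fun hF => ?_⟩
    have : (cofinite ⊓ 𝓟 X).NeBot := hS.cofinite_inf_principal_neBot
    obtain ⟨x, hx, hxX⟩ := (((eventually_F fun _ => False).1 (by simp [hF])).and
      (eventually_mem X)).exists
    have := Set.Infinite.cofinite_inf_principal_neBot hxX
    exact hx.exists.elim fun _ => id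
  have hU : (Ultrafilter.of F : Filter (M × M)) ≤ F := Ultrafilter.of_le F
  refine ⟨Ultrafilter.of F, hU ((eventually_F _).2 ?_), fun s hs => hU ((eventually_F _).2 ?_),
    fun t => hU ((eventually_F _).2 ?_)⟩
  · exact .of_forall fun x => eventually_mem _
  · exact (eventually_notMem X hs).mono fun x hx => .of_forall fun _ => hx
  · refine .of_forall fun x => ?_
    by_cases ht : (t x).Finite
    · exact (eventually_notMem _ ht).mono fun a ha _ => ha
    · exact .of_forall fun a ha => absurd ha ht

section Geometric

variable {L : FirstOrder.Language.{u, u}} [L.Structure M] {r : L.Relations 3}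

theorem finite_setOf_infinite_fiber (hC : IsCRelation (interpC L M r)) (hmin : CMinimal L M r)
    (hgeom : Geometric L M) {S : Set (M × M)} (hS : (univ : Set M).Definable₂ L S)
    (hfin : ∀ a, {x | (x, a) ∈ S}.Finite) : {x | {a | (x, a) ∈ S}.Infinite}.Finite := by
  by_contra hinf
  obtain ⟨U, hUS, hU₁, hU₂⟩ := exists_ultrafilter_generic hinf
  obtain ⟨x₀, -⟩ := Set.Infinite.nonempty hinf
  have : Nonempty M := ⟨x₀⟩
  let A : Set (Ultrapower M U) := range fun m => Ultrapower.mk U fun _ => m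
  let x : Ultrapower M U := Ultrapower.mk U Prod.fst
  let a : Ultrapower M U := Ultrapower.mk U Prod.snd
  have hx : x ∉ acl L _ A :=
    Ultrapower.mk_notMem_acl (g := fun _ => id) fun t =>
      eventually_imp_distrib_left.2 fun ht => hU₁ _ ht
  have ha : a ∉ acl L _ (A ∪ {x}) := by
    rw [union_singleton, show insert x A = _ from (Option.range_eq fun θ : Option M =>
      Ultrapower.mk U fun p => θ.elim p.1 id).symm]
    exact Ultrapower.mk_notMem_acl fun t => hU₂ fun y => t fun θ => θ.elim y id
  have hxa : x ∈ acl L _ (A ∪ {a}) := by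
    have hfamily : DefinableFamily L univ fun v : Fin 1 → M => {x | (x, v 0) ∈ S} := by
      exact hS.preimage_map (F := fun w : Fin 1 ⊕ Fin 1 → M => ![w (.inr 0), w (.inl 0)])
        (Fin.forall_fin_two.2 ⟨.proj L, .proj L⟩)
    have hdef := Ultrapower.definable₁_internalSet (U := U) hfamily fun p _ => p.2
    rw [range_const] at hdef
    exact ⟨_, hdef, Ultrapower.finite_internalSet hC hmin (hdef.mono (subset_univ _))
      (.of_forall fun p => hfin p.2), Ultrapower.mk_mem_internalSet.2 hUS⟩
  exact ha (hgeom _ _ (Ultrapower.elementarilyEquivalent U) A x a hxa hx)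

theorem finite_setOf_infinite_setOf_infinite (hC : IsCRelation (interpC L M r))
    (hmin : CMinimal L M r) (hgeom : Geometric L M) {s : (Fin 2 → M) → Set M}
    (hs : DefinableFamily L univ s) (hfin : ∀ v, (s v).Finite) :
    {x | {a | {b | x ∈ s ![a, b]}.Infinite}.Infinite}.Finite := by
  have hfin_fixed (a : M) : {x | {b | x ∈ s ![a, b]}.Infinite}.Finite :=
    finite_setOf_infinite_fiber hC hmin hgeom (S := {p | p.1 ∈ s ![a, p.2]})
      (hs.definable_mem (.proj L) <|
        Fin.forall_fin_two.2 ⟨L.definableFun_const _ (mem_univ a), .proj L⟩)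
      fun b => hfin ![a, b]
  have hfamily : DefinableFamily L univ fun v : Fin 2 → M => {b | v 0 ∈ s ![v 1, b]} :=
    hs.definable_mem (.proj L) <| Fin.forall_fin_two.2 ⟨.proj L, .proj L⟩
  exact finite_setOf_infinite_fiber hC hmin hgeom
    (S := {p | {b | p.1 ∈ s ![p.2, b]}.Infinite}) (hfamily.definable_infinite hC hmin) hfin_fixed

end Geometric

/-- The fibre above the node `B` of the map from `M` to the nodes of the tree coded by `R`. -/
def nodeFiber (C : M → M → M → Prop) (R : Set (Fin 3 → M)) (B : Set M) : Set M :=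
  {x | ∃ a b, ![x, a, b] ∈ R ∧ node C a b = B}

section NodeFiber

variable {L : FirstOrder.Language.{u, u}} [L.Structure M] {r : L.Relations 3} {A : Set M}
  {R : Set (Fin 3 → M)}

theorem definable_node_eq {β : Type*} (r : L.Relations 3) (i j k l : β) :
    A.Definable L {v : β → M |
      node (interpC L M r) (v i) (v j) = node (interpC L M r) (v k) (v l)} := by
  have hnode (i j : β) : A.Definable L {w : β ⊕ Fin 1 → M |
      w (.inr 0) ∈ node (interpC L M r) (w (.inl i)) (w (.inl j))} :=
    (definable_interpC r (.proj L) (.proj L) (.proj L)).compl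
  simp only [Set.ext_iff, iff_def]
  exact definable_forall <| ((hnode i j).himp (hnode k l)).inter ((hnode k l).himp (hnode i j))

theorem definableFamily_nodeFiber (r : L.Relations 3) (hR : A.Definable L R) :
    DefinableFamily L A fun v : Fin 2 → M =>
      nodeFiber (interpC L M r) R (node (interpC L M r) (v 0) (v 1)) :=
  definable_exists <| definable_exists <|
    (definable_triple_mem hR (.proj L) (.proj L) (.proj L)).inter <|
    definable_node_eq r _ _ _ _

variable [TopologicalSpace M]

theorem definable₁_setOf_mem_interior_nodeFiber (hC : IsCRelation (interpC L M r))
    (hB : IsTopologicalBasis {W | IsCone (interpC L M r) W}) (hR : A.Definable L R) :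
    A.Definable₁ L {x | ∃ a b, ![x, a, b] ∈ R ∧
      x ∈ interior (nodeFiber (interpC L M r) R (node (interpC L M r) a b))} := by
  refine definable_exists <| definable_exists <|
    (definable_triple_mem hR (.proj L) (.proj L) (.proj L)).inter ?_
  let e : Fin 2 → (Fin 1 ⊕ Fin 1) ⊕ Fin 1 := ![.inl (.inr 0), .inr 0]
  exact ((definableFamily_nodeFiber r hR).interior hC hB).definable_mem (.proj L)
    (g := fun w b => w (e b)) fun _ => .proj L

theorem finite_setOf_notMem_interior_nodeFiber (hC : IsCRelation (interpC L M r))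
    (hB : IsTopologicalBasis {W | IsCone (interpC L M r) W}) (hmin : CMinimal L M r)
    (hgeom : Geometric L M) (hR : (univ : Set M).Definable L R)
    (hnode : ∀ x a b, ![x, a, b] ∈ R → ¬ IsLeafSet (node (interpC L M r) a b)) :
    {x | ∃ a b, ![x, a, b] ∈ R ∧
      x ∉ interior (nodeFiber (interpC L M r) R (node (interpC L M r) a b))}.Finite := by
  let C := interpC L M r
  let s : (Fin 2 → M) → Set M := fun v => nodeFiber C R (node C (v 0) (v 1))
  have hs : DefinableFamily L univ s := definableFamily_nodeFiber r hR
  have hfin (v : Fin 2 → M) : (s v \ interior (s v)).Finite :=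
    ((hmin M _ rfl _ (hs.definable₁ v)).finite_frontier hC hB).subset
      (sdiff_subset_sdiff_left subset_closure)
  have hdiff : DefinableFamily L univ fun v => s v \ interior (s v) :=
    hs.sdiff (hs.interior hC hB)
  refine (finite_setOf_infinite_setOf_infinite hC hmin hgeom hdiff hfin).subset ?_
  rintro x ⟨a₀, b₀, hx, hxint⟩
  have hab : a₀ ≠ b₀ := by
    rintro rfl
    exact hnode x _ _ hx ⟨a₀, hC.node_self a₀⟩
  refine (hC.infinite_node hab).mono fun a ha => ?_
  refine (hC.infinite_setOf_node_eq hab ha).mono fun b (hb : node C a b = node C a₀ b₀) => ?_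
  change x ∈ nodeFiber C R (node C a b) \ interior (nodeFiber C R (node C a b))
  rw [hb]
  exact ⟨⟨a₀, b₀, hx, rfl⟩, hxint⟩

end NodeFiber

theorem statement3 {L : FirstOrder.Language.{u, u}} {M : Type u} [L.Structure M]
    (r : L.Relations 3)
    (hC : IsCRelation (interpC L M r))
    (hmin : CMinimal L M r)
    (hgeom : Geometric L M)
    (R : Set (Fin 3 → M))
    (hRdef : Set.Definable (univ : Set M) L R)
    (hfun : ∀ x a b a' b', ![x, a, b] ∈ R → ![x, a', b'] ∈ R →
      node (interpC L M r) a b = node (interpC L M r) a' b')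
    (hnode : ∀ x a b, ![x, a, b] ∈ R → ¬ IsLeafSet (node (interpC L M r) a b)) :
    ∃ F K : Set M, F.Finite ∧ Set.Definable₁ (univ : Set M) L K ∧
      {x | ∃ a b, ![x, a, b] ∈ R} = F ∪ K ∧
      ∀ x ∈ K, ∃ W : Set M, IsCone (interpC L M r) W ∧ x ∈ W ∧
        ∀ y ∈ K ∩ W, ∀ a b a' b', ![x, a, b] ∈ R → ![y, a', b'] ∈ R →
          node (interpC L M r) a b = node (interpC L M r) a' b' := by
  rcases subsingleton_or_nontrivial M with _ | _
  · exact ⟨_, ∅, toFinite _, definable_empty, (union_empty _).symm, by simp⟩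
  obtain ⟨_, hB⟩ := hC.exists_isTopologicalBasis
  refine ⟨_, _, finite_setOf_notMem_interior_nodeFiber hC hB hmin hgeom hRdef hnode,
    definable₁_setOf_mem_interior_nodeFiber hC hB hRdef, ?_, ?_⟩
  · ext x
    simp only [mem_ofPred_eq, mem_union, ← exists_or, ← and_or_left, em', and_true]
  · rintro x ⟨a₀, b₀, hx, hint⟩
    obtain ⟨W, hW, hxW, hWsub⟩ := hB.mem_nhds_iff.1 (mem_interior_iff_mem_nhds.1 hint)
    refine ⟨W, hW, hxW, fun y hy a b a' b' hab hab' => ?_⟩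
    obtain ⟨c, d, hcd, hnode_eq⟩ := hWsub hy.2
    rw [hfun x a b a₀ b₀ hab hx, hfun y a' b' c d hab' hcd, hnode_eq]

end CMinPaper
end

section
/- Let M be a C-minimal structure, V ⊆ M a cone, e an element of V, and f,g,h : V → M definable functions. Then there is a cone W with e ∈ W ⊆ V such that either C(f(x),g(x),h(x)) holds for every x ∈ W∖{e}, or ¬C(f(x),g(x),h(x)) holds for every x ∈ W∖{e}. -/
open FirstOrder Set

universe u

namespace CMinPaper

variable {M : Type u}

/-!
Every cone containing `e` has the form `{x | C a x e}` with `a ≠ e`, and any two of these are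
nested, so cones form a basis of a topology.  For `a ≠ e`, all `x` close to `e` stand in the same
`C`-relation to `a` as `e` does, so the truth value of an atomic formula in `C` and equality with
one free variable `x` stabilises as `x` tends to `e` with `x ≠ e`; this property is preserved by
Boolean combinations.  By minimality it therefore holds for every definable subset of `M`, in
particular for the set of those `x` at which given definable functions satisfy a given definable
relation.
-/

open Filter TopologicalSpace Topology

/-- A C-relation that need not be dense: a cone may consist of a single point.  The density axiom
of `IsCRelation` is replaced by its consequence `C x y y` for `x ≠ y`. -/
structure IsGeneralCRelation (C : M → M → M → Prop) : Prop where
  swap {x y z : M} : C x y z → C x z y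
  asymm {x y z : M} : C x y z → ¬ C y x z
  split {x y z : M} (w : M) : C x y z → C x w z ∨ C w y z
  of_ne {x y : M} : x ≠ y → C x y y

lemma IsCRelation.isGeneralCRelation {C : M → M → M → Prop} (hC : IsCRelation C) :
    IsGeneralCRelation C := by
  obtain ⟨swap, asymm, split, dense⟩ := hC
  refine ⟨swap _ _ _, asymm _ _ _, fun w => split _ _ _ w, fun {x y} hxy => ?_⟩
  obtain ⟨z, -, hz⟩ := dense x y hxy
  rcases split x z y y (swap _ _ _ hz) with h | h
  · exact h
  · exact absurd (swap _ _ _ h) (asymm _ _ _ (swap _ _ _ h))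

lemma IsCone.nontrivial {C : M → M → M → Prop} {V : Set M} (hV : IsCone C V) : Nontrivial M :=
  let ⟨a, b, hab, _⟩ := hV
  ⟨a, b, hab⟩

namespace IsGeneralCRelation

variable {C : M → M → M → Prop} {a b e x : M}

lemma swap_iff (hC : IsGeneralCRelation C) : C a b x ↔ C a x b := ⟨hC.swap, hC.swap⟩

lemma not_self_left (hC : IsGeneralCRelation C) (x y : M) : ¬ C x x y :=
  fun h => hC.asymm h h

lemma not_self_right (hC : IsGeneralCRelation C) (x y : M) : ¬ C x y x :=
  fun h => hC.not_self_left x y (hC.swap h)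

lemma self_iff_ne (hC : IsGeneralCRelation C) : C a x x ↔ x ≠ a :=
  ⟨by rintro h rfl; exact hC.not_self_left _ _ h, fun h => hC.of_ne h.symm⟩

lemma trans (hC : IsGeneralCRelation C) (hax : C a x e) (hae : C a e b) : C a x b := by
  rcases hC.split b (hC.swap hax) with h | hbex
  · exact hC.swap h
  · rcases hC.split x hae with h | hxeb
    · exact h
    · exact absurd (hC.swap hxeb) (hC.asymm (hC.swap hbex))

lemma middle_congr (hC : IsGeneralCRelation C) (hax : C a x e) : C a x b ↔ C a e b :=
  ⟨hC.trans (hC.swap hax), hC.trans hax⟩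

lemma left_congr (hC : IsGeneralCRelation C) (hax : C a x e) : C x a b ↔ C e a b := by
  have of_cone {y z : M} (hay : C a y z) (hz : C z a b) : C y a b := by
    rcases hC.split y (hC.swap hz) with hzya | hyba
    · exact absurd (hC.swap hzya) (hC.asymm (hC.swap hay))
    · exact hC.swap hyba
  exact ⟨of_cone (hC.swap hax), of_cone hax⟩

lemma exists_isCone_mem [Nontrivial M] (hC : IsGeneralCRelation C) (e : M) :
    ∃ V, IsCone C V ∧ e ∈ V :=
  let ⟨a, ha⟩ := exists_ne e
  ⟨{x | C a x e}, ⟨a, e, ha, rfl⟩, hC.of_ne ha⟩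

lemma exists_eq_setOf_of_mem (hC : IsGeneralCRelation C) {V : Set M} (hV : IsCone C V)
    (he : e ∈ V) : ∃ a, a ≠ e ∧ V = {x | C a x e} := by
  obtain ⟨a, b, -, rfl⟩ := hV
  have hae : C a e b := he
  refine ⟨a, by rintro rfl; exact hC.not_self_left _ _ hae, Set.ext fun x => ?_⟩
  exact ⟨fun hx => hC.trans hx (hC.swap hae), fun hx => hC.trans hx hae⟩

lemma subset_or_subset (hC : IsGeneralCRelation C) {V W : Set M} (hV : IsCone C V)
    (hW : IsCone C W) (heV : e ∈ V) (heW : e ∈ W) : V ⊆ W ∨ W ⊆ V := by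
  obtain ⟨a, -, rfl⟩ := hC.exists_eq_setOf_of_mem hV heV
  obtain ⟨b, -, rfl⟩ := hC.exists_eq_setOf_of_mem hW heW
  by_cases hab : C a b e
  · exact .inr fun x hbx => (hC.split x hab).resolve_right fun hxb =>
      hC.asymm hxb hbx
  · exact .inl fun x hax => (hC.split b hax).resolve_left hab

lemma isTopologicalBasis_isCone [Nontrivial M] (hC : IsGeneralCRelation C) :
    @IsTopologicalBasis M (generateFrom {V | IsCone C V}) {V | IsCone C V} :=
  let _ := generateFrom {V | IsCone C V}
  { exists_subset_inter := by
      rintro V hV W hW e ⟨heV, heW⟩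
      rcases hC.subset_or_subset hV hW heV heW with h | h
      · exact ⟨V, hV, heV, Set.subset_inter subset_rfl h⟩
      · exact ⟨W, hW, heW, Set.subset_inter h subset_rfl⟩
    sUnion_eq := Set.sUnion_eq_univ_iff.2 hC.exists_isCone_mem
    eq_generateFrom := rfl }

end IsGeneralCRelation

section Topology

variable {C : M → M → M → Prop} [TopologicalSpace M] {e : M}

lemma exists_isCone_subset_of_eventually (hM : IsTopologicalBasis {V | IsCone C V}) {V : Set M}
    (hV : V ∈ 𝓝 e) {p : M → Prop} (hp : ∀ᶠ x in 𝓝[≠] e, p x) :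
    ∃ W, IsCone C W ∧ e ∈ W ∧ W ⊆ V ∧ ∀ x ∈ W \ {e}, p x := by
  obtain ⟨W, hW, heW, hsub⟩ := hM.mem_nhds_iff.1 (inter_mem hV (eventually_nhdsWithin_iff.1 hp))
  exact ⟨W, hW, heW, fun x hx => (hsub hx).1, fun x hx => (hsub hx.1).2 hx.2⟩

variable (hC : IsGeneralCRelation C) (hM : IsTopologicalBasis {V | IsCone C V})

include hC hM

lemma eventually_rel_of_ne {a : M} (ha : a ≠ e) : ∀ᶠ x in 𝓝[≠] e, C a x e :=
  mem_nhdsWithin_of_mem_nhds <| (hM.isOpen ⟨a, e, ha, rfl⟩).mem_nhds (hC.of_ne ha)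

lemma eventuallyConst_setOf_eq (a : M) : EventuallyConst {x | x = a} (𝓝[≠] e) := by
  refine eventuallyConst_set.2 (.inr ?_)
  rcases eq_or_ne a e with rfl | ha
  · exact self_mem_nhdsWithin
  · filter_upwards [eventually_rel_of_ne hC hM ha]
    rintro x hx rfl
    exact hC.not_self_left _ _ hx

lemma eventuallyConst_setOf_left (a b : M) : EventuallyConst {x | C x a b} (𝓝[≠] e) := by
  wlog hab : a = e → b = e generalizing a b
  · simpa only [hC.swap_iff] using this b a (by tauto)
  rcases eq_or_ne a e with rfl | ha
  · obtain rfl := hab rfl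
    exact eventuallyConst_set.2 (.inl (eventually_mem_nhdsWithin.mono fun x hx => hC.of_ne hx))
  · refine (EventuallyConst.const (C e a b)).congr ?_
    filter_upwards [eventually_rel_of_ne hC hM ha] with x hx
    exact propext (hC.left_congr hx).symm

lemma eventuallyConst_setOf_middle (a b : M) : EventuallyConst {x | C a x b} (𝓝[≠] e) := by
  rcases eq_or_ne a e with rfl | ha
  · refine eventuallyConst_set.2 (.inr ?_)
    rcases eq_or_ne b a with rfl | hb
    · exact .of_forall fun x => hC.not_self_right _ _
    · filter_upwards [eventually_rel_of_ne hC hM hb] with x hbx hax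
      exact hC.asymm (hC.swap hbx) (hC.swap hax)
  · refine (EventuallyConst.const (C a e b)).congr ?_
    filter_upwards [eventually_rel_of_ne hC hM ha] with x hx
    exact propext (hC.middle_congr hx).symm

lemma QFDef.eventuallyConst {s : Set M} (hs : QFDef C s) : EventuallyConst s (𝓝[≠] e) := by
  induction hs with
  | atomC t₁ t₂ t₃ =>
    rcases t₁ with _ | a <;> rcases t₂ with _ | b <;> rcases t₃ with _ | c <;>
      simp only [Option.getD_none, Option.getD_some]
    · simpa only [hC.not_self_left] using! EventuallyConst.const False
    · simpa only [hC.not_self_left] using! EventuallyConst.const False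
    · simpa only [hC.not_self_right] using! EventuallyConst.const False
    · exact eventuallyConst_setOf_left hC hM b c
    · simpa only [hC.self_iff_ne] using! (eventuallyConst_setOf_eq hC hM a).comp Not
    · exact eventuallyConst_setOf_middle hC hM a c
    · simpa only [hC.swap_iff] using eventuallyConst_setOf_middle hC hM a b
    · exact .const _
  | atomEq t₁ t₂ =>
    rcases t₁ with _ | a <;> rcases t₂ with _ | b <;>
      simp only [Option.getD_none, Option.getD_some]
    · exact .const _
    · exact eventuallyConst_setOf_eq hC hM b
    · simpa only [eq_comm] using eventuallyConst_setOf_eq hC hM a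
    · exact .const _
  | compl _ ih => exact ih.comp Not
  | union _ _ ihs iht => exact ihs.comp₂ Or iht

end Topology

section Definability

variable {L : FirstOrder.Language.{u, u}} [L.Structure M]

lemma definable_interpC_s7 (r : L.Relations 3) :
    Set.Definable (univ : Set M) L {t : Fin 3 → M | interpC L M r (t 0) (t 1) (t 2)} := by
  refine Set.Definable.mono (Set.empty_definable_iff.2 ⟨r.formula Language.Term.var, ?_⟩)
    (Set.empty_subset _)
  ext t
  have ht : ![t 0, t 1, t 2] = t := List.ofFn_injective rfl
  simp only [Set.mem_ofPred_eq, Language.Formula.realize_rel, interpC, ht,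
    Language.Term.realize_var]

lemma definable₁_setOf_apply_mem {ι : Type*} [Finite ι] [Nonempty ι] {V : Set M}
    {F : ι → M → M} (hF : ∀ i, DefinableFunOn L M V (F i)) {R : Set (ι → M)}
    (hR : Set.Definable (univ : Set M) L R) :
    Set.Definable₁ (univ : Set M) L {x | x ∈ V ∧ (F · x) ∈ R} := by
  have hgraphs : Set.Definable (univ : Set M) L
      {t : Fin 1 ⊕ ι → M | ∀ i, t (.inl 0) ∈ V ∧ F i (t (.inl 0)) = t (.inr i)} := by
    rw [Set.ofPred_forall]
    exact Set.definable_iInter_of_finite fun i =>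
      (hF i).preimage_comp (![.inl 0, .inr i] : Fin 2 → Fin 1 ⊕ ι)
  have hexists := (hgraphs.inter (hR.preimage_comp Sum.inr)).exists_of_finite
  unfold Set.Definable₁
  convert hexists using 1
  ext v
  constructor
  · rintro ⟨hv, hvR⟩
    exact ⟨(F · (v 0)), fun i => ⟨hv, rfl⟩, hvR⟩
  · rintro ⟨u, hu, huR⟩
    obtain rfl : (F · (v 0)) = u := funext fun i => (hu i).2
    exact ⟨(hu (Classical.arbitrary ι)).1, huR⟩

end Definability

theorem statement7_general {L : FirstOrder.Language.{u, u}} {M : Type u} [L.Structure M]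
    {C : M → M → M → Prop} (hC : IsGeneralCRelation C)
    (hmin : ∀ s : Set M, Set.Definable₁ univ L s → QFDef C s)
    {V : Set M} (hV : IsCone C V) {e : M} (he : e ∈ V)
    {ι : Type*} [Finite ι] [Nonempty ι] {F : ι → M → M} (hF : ∀ i, DefinableFunOn L M V (F i))
    {R : Set (ι → M)} (hR : Set.Definable univ L R) :
    ∃ W : Set M, IsCone C W ∧ e ∈ W ∧ W ⊆ V ∧
      ((∀ x ∈ W \ {e}, (F · x) ∈ R) ∨ (∀ x ∈ W \ {e}, (F · x) ∉ R)) := by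
  have := hV.nontrivial
  let _ : TopologicalSpace M := generateFrom {V | IsCone C V}
  have hM : IsTopologicalBasis {V | IsCone C V} := hC.isTopologicalBasis_isCone
  have hVe : V ∈ 𝓝 e := (hM.isOpen hV).mem_nhds he
  have hconst : EventuallyConst {x | x ∈ V ∧ (F · x) ∈ R} (𝓝[≠] e) :=
    (hmin _ (definable₁_setOf_apply_mem hF hR)).eventuallyConst hC hM
  rcases eventuallyConst_set.1 hconst with h | h <;>
    obtain ⟨W, hW, heW, hWV, hWp⟩ := exists_isCone_subset_of_eventually hM hVe h
  · exact ⟨W, hW, heW, hWV, .inl fun x hx => (hWp x hx).2⟩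
  · exact ⟨W, hW, heW, hWV, .inr fun x hx hxR => hWp x hx ⟨hWV hx.1, hxR⟩⟩

theorem statement7 {L : FirstOrder.Language.{u, u}} {M : Type u} [L.Structure M]
    (r : L.Relations 3)
    (hC : IsCRelation (interpC L M r))
    (hmin : CMinimal L M r)
    (V : Set M) (hV : IsCone (interpC L M r) V) (e : M) (he : e ∈ V)
    (f g h : M → M)
    (hf : DefinableFunOn L M V f) (hg : DefinableFunOn L M V g)
    (hh : DefinableFunOn L M V h) :
    ∃ W : Set M, IsCone (interpC L M r) W ∧ e ∈ W ∧ W ⊆ V ∧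
      ((∀ x ∈ W \ {e}, interpC L M r (f x) (g x) (h x)) ∨
        (∀ x ∈ W \ {e}, ¬ interpC L M r (f x) (g x) (h x))) :=
  statement7_general hC.isGeneralCRelation (hmin M inferInstance rfl) hV he
    (F := ![f, g, h]) (Fin.forall_fin_succ.2 ⟨hf, Fin.forall_fin_two.2 ⟨hg, hh⟩⟩)
    (definable_interpC_s7 r)

end CMinPaper
end
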